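/- q-moments of the height function through q-correlation observables. Let q ∈ ℂ with q ≠ 0 and q^j ≠ 1 for 1 ≤ j ≤ ℓ. Then for every n ≥ 0, every signature ν ∈ Sign⁺_n, every integer x ≥ 1 and every ℓ ≥ 0: q^{ℓ·h_ν(x)} = Σ_{k=0}^{ℓ} (−q)^{−k} · binom(ℓ, k)_q · (q; q)_k · Σ_{𝔪} 𝓔_𝔪(ν; q), where binom(ℓ,k)_q := (q;q)_ℓ/((q;q)_k (q;q)_{ℓ−k}) is the q-binomial coefficient, and the inner sum runs over all signatures 𝔪 = (𝔪_1 ≥ … ≥ 𝔪_k) with 𝔪_k ≥ x (only the finitely many 𝔪 with 𝔪_1 ≤ ν_1 contribute, since 𝓔_𝔪(ν;q) = 0 otherwise). -/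

import Mathlib

noncomputable section

open Finset
open scoped Classical

/-- The `q`-Pochhammer symbol `(a; q)_m`. -/
def qp (a q : ℂ) (m : ℕ) : ℂ := ∏ i ∈ Finset.range m, (1 - a * q ^ i)

/-- The height function `h_ν(x) = #{j : ν_j ≥ x}` of a signature. -/
def htAt {N : ℕ} (ν : Fin N → ℕ) (x : ℕ) : ℕ := (Finset.univ.filter fun i => x ≤ ν i).card

/-- The `q`-correlation observable
`𝓔_𝔪(ν; q) = Σ_{I = {i₁<…<i_k} : ν_{i_p} = 𝔪_p} q^{i₁+…+i_k}` (`1`-based indices);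
for `k = 0` it equals `1`. -/
def corrObs (q : ℂ) {n k : ℕ} (ν : Fin n → ℕ) (m : Fin k → ℕ) : ℂ :=
  ∑ ι : Fin k → Fin n,
    if StrictMono ι ∧ ∀ p, ν (ι p) = m p then q ^ (∑ p : Fin k, ((ι p : ℕ) + 1)) else 0

theorem le_iff_lt_htAt {n : ℕ} {ν : Fin n → ℕ} (hν : Antitone ν) (x : ℕ) (i : Fin n) :
    x ≤ ν i ↔ (i : ℕ) < htAt ν x := by
  constructor
  · intro h
    have hsub : Finset.Iic i ⊆ Finset.univ.filter fun j => x ≤ ν j := by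
      intro j hj
      simpa using h.trans (hν (Finset.mem_Iic.mp hj))
    have hcard := Finset.card_le_card hsub
    rw [Fin.card_Iic] at hcard
    exact hcard
  · intro h
    by_contra hlt
    have hsub : (Finset.univ.filter fun j => x ≤ ν j) ⊆ Finset.Iio i := by
      intro j hj
      rw [Finset.mem_Iio]
      by_contra hji
      exact hlt ((Finset.mem_filter.mp hj).2.trans (hν (not_lt.mp hji)))
    have hcard := Finset.card_le_card hsub
    rw [Fin.card_Iio] at hcard
    exact absurd h (not_lt.mpr hcard)

theorem htAt_le {n : ℕ} (ν : Fin n → ℕ) (x : ℕ) : htAt ν x ≤ n :=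
  (Finset.card_le_univ _).trans_eq (Fintype.card_fin n)

/-- The elementary symmetric polynomial `e_k(q, q², …, q^h)`. -/
def esymmPow (q : ℂ) (h k : ℕ) : ℂ :=
  ∑ s ∈ (Finset.range h).powersetCard k, q ^ ∑ i ∈ s, (i + 1)

theorem esymmPow_zero_right (q : ℂ) (h : ℕ) : esymmPow q h 0 = 1 := by
  simp [esymmPow]

theorem esymmPow_zero_succ (q : ℂ) (k : ℕ) : esymmPow q 0 (k + 1) = 0 := by
  rw [esymmPow, Finset.powersetCard_eq_empty.mpr (by simp), Finset.sum_empty]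

theorem esymmPow_succ_succ (q : ℂ) (h k : ℕ) :
    esymmPow q (h + 1) (k + 1) = esymmPow q h (k + 1) + q ^ (h + 1) * esymmPow q h k := by
  have hnot : ∀ s ∈ (Finset.range h).powersetCard k, h ∉ s := fun s hs hmem =>
    Finset.notMem_range_self ((Finset.mem_powersetCard.mp hs).1 hmem)
  unfold esymmPow
  rw [Finset.range_add_one, Finset.powersetCard_succ_insert Finset.notMem_range_self,
    Finset.sum_union, Finset.sum_image, Finset.mul_sum]
  · congr 1
    refine Finset.sum_congr rfl fun s hs => ?_
    rw [Finset.sum_insert (hnot s hs), pow_add]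
  · intro s hs t ht hst
    rw [← Finset.erase_insert (hnot s hs), ← Finset.erase_insert (hnot t ht), hst]
  · rw [Finset.disjoint_left]
    intro s hs hs'
    obtain ⟨t, -, rfl⟩ := Finset.mem_image.mp hs'
    exact Finset.notMem_range_self
      ((Finset.mem_powersetCard.mp hs).1 (Finset.mem_insert_self h t))

theorem tsum_corrObs (q : ℂ) {n : ℕ} {ν : Fin n → ℕ} (hν : Antitone ν) (x k : ℕ) :
    ∑' m : {f : Fin k → ℕ // Antitone f ∧ ∀ i, x ≤ f i}, corrObs q ν m.val =
      ∑ ι : Fin k → Fin n, if StrictMono ι ∧ ∀ p, x ≤ ν (ι p) then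
        q ^ (∑ p : Fin k, ((ι p : ℕ) + 1)) else 0 := by
  have key : ∀ ι : Fin k → Fin n,
      HasSum (fun m : {f : Fin k → ℕ // Antitone f ∧ ∀ i, x ≤ f i} =>
        if StrictMono ι ∧ ∀ p, ν (ι p) = m.val p then
          q ^ (∑ p : Fin k, ((ι p : ℕ) + 1)) else 0)
        (if StrictMono ι ∧ ∀ p, x ≤ ν (ι p) then
          q ^ (∑ p : Fin k, ((ι p : ℕ) + 1)) else 0) := by
    intro ι
    by_cases hι : StrictMono ι ∧ ∀ p, x ≤ ν (ι p)
    · convert hasSum_single (⟨ν ∘ ι, hν.comp_monotone hι.1.monotone, hι.2⟩ :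
        {f : Fin k → ℕ // Antitone f ∧ ∀ i, x ≤ f i}) ?_ using 1
      · simp [hι]
      · intro m hm
        rw [if_neg]
        rintro ⟨-, hc⟩
        exact hm (Subtype.ext (funext fun p => (hc p).symm))
    · rw [if_neg hι]
      convert hasSum_zero using 2 with m
      rw [if_neg]
      rintro ⟨hmono, hc⟩
      exact hι ⟨hmono, fun p => (hc p).symm ▸ m.2.2 p⟩
  exact (hasSum_sum fun ι _ => key ι).tsum_eq

theorem sum_strictMono_eq_esymmPow (q : ℂ) {n : ℕ} {ν : Fin n → ℕ} (hν : Antitone ν)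
    (x k : ℕ) :
    (∑ ι : Fin k → Fin n, if StrictMono ι ∧ ∀ p, x ≤ ν (ι p) then
        q ^ (∑ p : Fin k, ((ι p : ℕ) + 1)) else 0) = esymmPow q (htAt ν x) k := by
  rw [← Finset.sum_filter]
  refine Finset.sum_nbij (fun ι => Finset.univ.image fun p => (ι p : ℕ)) ?_ ?_ ?_ ?_
  · intro ι hι
    obtain ⟨hmono, hge⟩ := (Finset.mem_filter.mp hι).2
    refine Finset.mem_powersetCard.mpr ⟨fun j hj => ?_, ?_⟩
    · obtain ⟨p, -, rfl⟩ := Finset.mem_image.mp hj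
      exact Finset.mem_range.mpr ((le_iff_lt_htAt hν x _).mp (hge p))
    · have hinj : Function.Injective fun p => (ι p : ℕ) :=
        Fin.val_injective.comp hmono.injective
      rw [Finset.card_image_of_injective _ hinj, Finset.card_univ, Fintype.card_fin]
  · intro ι hι κ hκ h
    have hι' : StrictMono fun p => (ι p : ℕ) := (Finset.mem_filter.mp hι).2.1
    have hκ' : StrictMono fun p => (κ p : ℕ) := (Finset.mem_filter.mp hκ).2.1
    have hrange : Set.range (fun p => (ι p : ℕ)) = Set.range fun p => (κ p : ℕ) := by
      simpa using congrArg (fun s : Finset ℕ => (s : Set ℕ)) h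
    funext p
    exact Fin.ext (congrFun ((StrictMono.range_inj hι' hκ').mp hrange) p)
  · intro s hs
    obtain ⟨hsub, hcard⟩ := Finset.mem_powersetCard.mp hs
    have hlt : ∀ p, s.orderEmbOfFin hcard p < htAt ν x := fun p =>
      Finset.mem_range.mp (hsub (s.orderEmbOfFin_mem hcard p))
    refine ⟨fun p => ⟨s.orderEmbOfFin hcard p, (hlt p).trans_le (htAt_le ν x)⟩, ?_, ?_⟩
    · refine Finset.mem_filter.mpr ⟨Finset.mem_univ _, fun a b hab => ?_, fun p => ?_⟩
      · exact (s.orderEmbOfFin hcard).strictMono hab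
      · exact (le_iff_lt_htAt hν x _).mpr (hlt p)
    · exact Finset.image_orderEmbOfFin_univ s hcard
  · intro ι hι
    have hinj : Function.Injective fun p => (ι p : ℕ) :=
      Fin.val_injective.comp (Finset.mem_filter.mp hι).2.1.injective
    rw [Finset.sum_image hinj.injOn]

theorem qp_succ (q : ℂ) (m : ℕ) : qp q q (m + 1) = qp q q m * (1 - q ^ (m + 1)) := by
  rw [qp, Finset.prod_range_succ, ← pow_succ', qp]

theorem qp_ne_zero {q : ℂ} {ℓ : ℕ} (hq : ∀ j : ℕ, 1 ≤ j → j ≤ ℓ → q ^ j ≠ 1) {m : ℕ}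
    (hm : m ≤ ℓ) : qp q q m ≠ 0 := by
  refine Finset.prod_ne_zero_iff.mpr fun i hi => ?_
  rw [← pow_succ']
  exact sub_ne_zero.mpr (hq (i + 1) (by lia) (by have := Finset.mem_range.mp hi; lia)).symm

/-- Expansion of `q^{ℓh}` in the elementary symmetric polynomials `e_k(q, …, q^h)`. -/
theorem sum_qp_mul_esymmPow {q : ℂ} (hq0 : q ≠ 0) (h ℓ : ℕ)
    (hq : ∀ j : ℕ, 1 ≤ j → j ≤ ℓ → q ^ j ≠ 1) :
    ∑ k ∈ Finset.range (ℓ + 1),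
      (-q)⁻¹ ^ k * (qp q q ℓ / qp q q (ℓ - k)) * esymmPow q h k = q ^ (ℓ * h) := by
  induction h generalizing ℓ with
  | zero =>
    rw [Finset.sum_range_succ']
    simp [esymmPow_zero_succ, esymmPow_zero_right, div_self (qp_ne_zero hq le_rfl)]
  | succ h ih =>
    cases ℓ with
    | zero => simp [esymmPow_zero_right, qp]
    | succ ℓ =>
      have ih₁ := ih (ℓ + 1) hq
      have ih₂ := ih ℓ fun j hj hjl => hq j hj (by lia)
      rw [Finset.sum_range_succ'] at ih₁ ⊢
      simp only [esymmPow_zero_right, esymmPow_succ_succ, mul_add, Finset.sum_add_distrib]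
        at ih₁ ⊢
      rw [add_right_comm, ih₁]
      have hstep : ∀ k ∈ Finset.range (ℓ + 1),
          (-q)⁻¹ ^ (k + 1) * (qp q q (ℓ + 1) / qp q q (ℓ + 1 - (k + 1))) *
            (q ^ (h + 1) * esymmPow q h k) =
          -(q ^ h * (1 - q ^ (ℓ + 1))) *
            ((-q)⁻¹ ^ k * (qp q q ℓ / qp q q (ℓ - k)) * esymmPow q h k) := by
        intro k _
        have hcancel : (-q)⁻¹ * q = -1 := by
          rw [inv_neg, neg_mul, inv_mul_cancel₀ hq0]
        rw [Nat.add_sub_add_right, qp_succ, pow_succ, pow_succ q h]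
        linear_combination ((-q)⁻¹ ^ k * (qp q q ℓ * (1 - q ^ (ℓ + 1)) / qp q q (ℓ - k)) *
          q ^ h * esymmPow q h k) * hcancel
      rw [Finset.sum_congr rfl hstep, ← Finset.mul_sum, ih₂]
      ring

/-- **`q`-moments of the height function through `q`-correlation observables**:
`q^{ℓ·h_ν(x)} = Σ_{k=0}^{ℓ} (−q)^{−k} binom(ℓ,k)_q (q;q)_k Σ_{𝔪₁ ≥ … ≥ 𝔪_k ≥ x} 𝓔_𝔪(ν; q)`,
where the inner sum (over signatures `𝔪 ∈ Sign⁺_k` with all parts `≥ x`) has finitely many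
nonzero terms. -/
theorem statement16 (q : ℂ) (hq0 : q ≠ 0) (ℓ : ℕ)
    (hq : ∀ j : ℕ, 1 ≤ j → j ≤ ℓ → q ^ j ≠ 1)
    (n : ℕ) (ν : Fin n → ℕ) (hν : Antitone ν) (x : ℕ) (hx : 1 ≤ x) :
    q ^ (ℓ * htAt ν x) =
      ∑ k ∈ Finset.range (ℓ + 1),
        (-q) ^ (-(k : ℤ)) * (qp q q ℓ / (qp q q k * qp q q (ℓ - k))) * qp q q k *
          ∑' m : {f : Fin k → ℕ // Antitone f ∧ ∀ i, x ≤ f i}, corrObs q ν m.val := by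
  rw [← sum_qp_mul_esymmPow hq0 (htAt ν x) ℓ hq]
  refine Finset.sum_congr rfl fun k hk => ?_
  have hk0 : qp q q k ≠ 0 := qp_ne_zero hq (by have := Finset.mem_range.mp hk; lia)
  rw [tsum_corrObs q hν, sum_strictMono_eq_esymmPow q hν, zpow_neg, zpow_natCast, inv_pow]
  congr 1
  rw [mul_assoc, div_mul_eq_mul_div, mul_comm (qp q q k), mul_div_mul_right _ _ hk0]

end
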